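/- Assume the bounded-variance condition, the concave-penalty condition, and the sparse-eigenvalue condition with constants c > 0 and κ. Let β₀ ∈ B_{τ,κ} with s = ‖β₀‖₀, let β̂ be a global minimizer of Q_n over B_{τ,κ}, and assume ‖n⁻¹Xᵀε‖_∞ ≤ λ/2. Set C₀ = (1 + 2c₃)/(c·c₂) and ρ = C₀²λ²/τ², and assume ρ < 1. Then the prediction loss satisfies n^{−1/2}·‖X(β̂ − β₀)‖₂ ≤ √c·C₀·λ·s^{1/2}·(1 − ρ)^{−1/2}. -/

import Mathlib

open scoped BigOperators Classical

/-- The number of nonzero coordinates of a vector (the `L₀` "norm"). -/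
noncomputable def l0 {p : ℕ} (v : Fin p → ℝ) : ℕ :=
  (Finset.univ.filter fun j => v j ≠ 0).card

/-- The thresholded parameter space `B_{τ,κ}`: vectors with fewer than `κ/2` nonzero
coordinates, each nonzero coordinate having magnitude at least `τ`. -/
def Bset {p : ℕ} (τ : ℝ) (κ : ℕ) : Set (Fin p → ℝ) :=
  {β | 2 * l0 β < κ ∧ ∀ j, β j = 0 ∨ τ ≤ |β j|}

/-- The penalized negative log-likelihood
`Q_n(β) = −n⁻¹(yᵀXβ − Σᵢ b((Xβ)ᵢ)) + Σⱼ p_λ(|β_j|)`. -/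
noncomputable def Qn {n p : ℕ} (X : Matrix (Fin n) (Fin p) ℝ) (y : Fin n → ℝ)
    (b : ℝ → ℝ) (pen : ℝ → ℝ) (β : Fin p → ℝ) : ℝ :=
  -(1 / (n : ℝ)) * (∑ i, y i * X.mulVec β i - ∑ i, b (X.mulVec β i)) + ∑ j, pen |β j|

theorem aux_taylor (b : ℝ → ℝ) (hb : ContDiff ℝ 2 b) (c₂ : ℝ)
    (hvar : ∀ θ : ℝ, c₂ ≤ deriv (deriv b) θ) (s t : ℝ) :
    c₂ / 2 * (t - s) ^ 2 ≤ b t - b s - deriv b s * (t - s) := by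
  have hd : Differentiable ℝ b := hb.differentiable (by norm_num)
  have hd2 : Differentiable ℝ (deriv b) := by
    have h1 : ContDiff ℝ 1 (deriv b) := by
      have : ContDiff ℝ (1 + 1) b := by
        convert hb using 1
        norm_num
      exact (contDiff_succ_iff_deriv.1 this).2.2
    exact h1.differentiable (by norm_num)
  let g : ℝ → ℝ := fun x => b x - c₂ / 2 * x ^ 2
  have hg : ∀ x, HasDerivAt g (deriv b x - c₂ * x) x := by
    intro x
    have h1 := (hd x).hasDerivAt
    have h2 := ((hasDerivAt_id x).pow 2).const_mul (c₂ / 2)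
    have h3 := h1.sub h2
    refine (h3.congr_deriv ?_)
    simp
    ring
  have hg' : deriv g = fun x => deriv b x - c₂ * x := funext fun x => (hg x).deriv
  have hg2 : ∀ x, HasDerivAt (deriv g) (deriv (deriv b) x - c₂) x := by
    intro x
    rw [hg']
    have h3 := (hd2 x).hasDerivAt.sub ((hasDerivAt_id x).const_mul c₂)
    refine (h3.congr_deriv ?_)
    simp
  have hconv : ConvexOn ℝ Set.univ g := by
    apply convexOn_univ_of_deriv2_nonneg
    · exact fun x => (hg x).differentiableAt
    · exact fun x => (hg2 x).differentiableAt
    · intro x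
      have : (deriv^[2] g) x = deriv (deriv b) x - c₂ := (hg2 x).deriv
      rw [this]
      linarith [hvar x]
  rcases lt_trichotomy s t with h | h | h
  · have h1 := hconv.le_slope_of_hasDerivAt (Set.mem_univ s) (Set.mem_univ t) h (hg s)
    rw [slope_def_field, le_div_iff₀ (by linarith)] at h1
    simp only [g] at h1
    nlinarith
  · subst h
    simp
  · have h1 := hconv.slope_le_of_hasDerivAt (Set.mem_univ t) (Set.mem_univ s) h (hg s)
    rw [slope_def_field, div_le_iff₀ (by linarith)] at h1
    simp only [g] at h1
    nlinarith

theorem aux_pen (pen : ℝ → ℝ) (d : ℝ)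
    (hmono : MonotoneOn pen (Set.Ici 0))
    (hconc : ConcaveOn ℝ (Set.Ici 0) pen)
    (hpen0 : pen 0 = 0)
    (hpend0 : HasDerivWithinAt pen d (Set.Ici 0) 0) (x y : ℝ) :
    pen |x| - pen |y| ≤ d * |y - x| := by
  have hlin : ∀ u : ℝ, 0 ≤ u → pen u ≤ d * u := by
    intro u hu
    rcases hu.eq_or_lt with h | h
    · subst h
      simp [hpen0]
    · have h1 := hconc.slope_le_of_hasDerivWithinAt (Set.mem_Ici.2 le_rfl) (Set.mem_Ici.2 hu) h hpend0
      rw [slope_def_field, div_le_iff₀ (by linarith), hpen0] at h1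
      linarith
  have hsc : ∀ u w : ℝ, 0 ≤ u → 0 ≤ w → 0 < u + w → u / (u + w) * pen (u + w) ≤ pen u := by
    intro u w hu hw hs
    have h1 := hconc.2 (Set.mem_Ici.2 hs.le) (Set.mem_Ici.2 (le_refl (0 : ℝ)))
      (show 0 ≤ u / (u + w) by positivity) (show 0 ≤ w / (u + w) by positivity)
      (by field_simp)
    simp only [smul_eq_mul, hpen0, mul_zero, add_zero] at h1
    rwa [div_mul_cancel₀ _ hs.ne'] at h1
  have hsub : ∀ u w : ℝ, 0 ≤ u → 0 ≤ w → pen (u + w) ≤ pen u + pen w := by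
    intro u w hu hw
    rcases (add_nonneg hu hw).eq_or_lt with h | h
    · have h1 : u = 0 := by linarith
      have h2 : w = 0 := by linarith
      simp [h1, h2, hpen0]
    · have h1 := hsc u w hu hw h
      have h2 := hsc w u hw hu (by linarith)
      rw [add_comm w u] at h2
      have : u / (u + w) * pen (u + w) + w / (u + w) * pen (u + w) = pen (u + w) := by
        field_simp
      linarith
  have h1 : |x| ≤ |y| + |y - x| := by
    have := abs_sub_abs_le_abs_sub x y
    rw [abs_sub_comm x y] at this
    linarith
  have h2 := hmono (Set.mem_Ici.2 (abs_nonneg x)) (Set.mem_Ici.2 (by positivity)) h1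
  linarith [hsub |y| |y - x| (abs_nonneg _) (abs_nonneg _), hlin |y - x| (abs_nonneg _)]

theorem aux_l0_sub {p : ℕ} (u v : Fin p → ℝ) : l0 (u - v) ≤ l0 u + l0 v := by
  unfold l0
  refine le_trans (Finset.card_le_card ?_) (Finset.card_union_le _ _)
  intro j
  simp only [Finset.mem_filter, Finset.mem_univ, true_and, Finset.mem_union, Pi.sub_apply]
  intro h
  by_contra hh
  push Not at hh
  apply h
  rw [hh.1, hh.2, sub_zero]

theorem aux_l1 {p : ℕ} (v : Fin p → ℝ) :
    (∑ j, |v j|) ^ 2 ≤ (l0 v : ℝ) * ∑ j, (v j) ^ 2 := by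
  have h1 : ∑ j, |v j| = ∑ j ∈ Finset.univ.filter (fun j => v j ≠ 0), |v j| := by
    symm
    apply Finset.sum_subset (Finset.filter_subset _ _)
    intro j _ hj
    simpa using hj
  have h2 : ∑ j ∈ Finset.univ.filter (fun j => v j ≠ 0), |v j| ^ 2 ≤ ∑ j, (v j) ^ 2 := by
    simp only [sq_abs]
    exact Finset.sum_le_sum_of_subset_of_nonneg (Finset.filter_subset _ _)
      (fun _ _ _ => sq_nonneg _)
  rw [h1]
  refine le_trans sq_sum_le_card_mul_sum_sq ?_
  exact mul_le_mul_of_nonneg_left h2 (Nat.cast_nonneg _)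

theorem aux_count {p : ℕ} (τ : ℝ) (hτ : 0 < τ) (u v : Fin p → ℝ)
    (hu : ∀ j, u j = 0 ∨ τ ≤ |u j|) :
    τ ^ 2 * (l0 (u - v) : ℝ) ≤ τ ^ 2 * (l0 v : ℝ) + ∑ j, ((u - v) j) ^ 2 := by
  have e : ∀ w : Fin p → ℝ, (l0 w : ℝ) = ∑ j, if w j ≠ 0 then (1 : ℝ) else 0 := by
    intro w
    simp [l0, Finset.sum_ite]
  rw [e, e, Finset.mul_sum, Finset.mul_sum, ← Finset.sum_add_distrib]
  apply Finset.sum_le_sum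
  intro j _
  simp only [Pi.sub_apply]
  by_cases hv : v j = 0
  · rcases hu j with h | h
    · simp [hv, h]
    · have : τ ^ 2 ≤ (u j) ^ 2 := by
        rw [← sq_abs (u j)]
        gcongr
      have h0 : u j ≠ 0 := by
        intro h0
        simp [h0] at h
        linarith
      simpa [hv, h0] using this
  · simp only [ne_eq, hv, not_false_eq_true, if_true]
    split_ifs
    · nlinarith [sq_nonneg (u j - v j), sq_nonneg τ]
    · nlinarith [sq_nonneg (u j - v j), sq_nonneg τ]

/-- Deterministic form of Theorem 1(c): with `C₀ = (1 + 2c₃)/(c·c₂)` and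
`ρ = C₀²λ²/τ² < 1`, on the event `‖n⁻¹Xᵀε‖_∞ ≤ λ/2` the prediction loss of the global
minimizer satisfies `n^{−1/2}‖X(β̂ − β₀)‖₂ ≤ √c · C₀ λ s^{1/2} (1−ρ)^{−1/2}`. -/
theorem prediction_loss_bound {n p : ℕ} (hn : 0 < n) (hp : 0 < p)
    (X : Matrix (Fin n) (Fin p) ℝ) (b : ℝ → ℝ) (hb : ContDiff ℝ 2 b)
    (β₀ : Fin p → ℝ) (ε : Fin n → ℝ) (y : Fin n → ℝ)
    (hy : ∀ i, y i = deriv b (X.mulVec β₀ i) + ε i)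
    -- bounded-variance condition
    (c₂ : ℝ) (hc₂ : 0 < c₂) (hc₂1 : c₂ ≤ 1)
    (hvar : ∀ θ : ℝ, c₂ ≤ deriv (deriv b) θ ∧ deriv (deriv b) θ ≤ c₂⁻¹)
    -- concave-penalty condition
    (pen : ℝ → ℝ) (lam c₃ : ℝ) (hc₃ : 0 < c₃) (hlam : 0 ≤ lam)
    (hmono : MonotoneOn pen (Set.Ici 0))
    (hconc : ConcaveOn ℝ (Set.Ici 0) pen)
    (hpen0 : pen 0 = 0)
    (hpendiff : DifferentiableOn ℝ pen (Set.Ioi 0))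
    (hpend0 : HasDerivWithinAt pen (c₃ * lam) (Set.Ici 0) 0)
    -- sparse-eigenvalue (robust spark) condition
    (c : ℝ) (hc : 0 < c) (κ : ℕ)
    (hse : ∀ v : Fin p → ℝ, l0 v < κ →
      c * ∑ j, (v j) ^ 2 ≤ (1 / (n : ℝ)) * ∑ i, (X.mulVec v i) ^ 2)
    -- thresholded parameter space and global minimizer
    (τ : ℝ) (hτ : 0 < τ) (hβ₀ : β₀ ∈ Bset τ κ)
    (βh : Fin p → ℝ) (hβh : βh ∈ Bset τ κ)
    (hmin : ∀ β ∈ Bset τ κ, Qn X y b pen βh ≤ Qn X y b pen β)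
    -- the event `‖n⁻¹Xᵀε‖_∞ ≤ λ/2`
    (hE : ∀ j, |(1 / (n : ℝ)) * ∑ i, X i j * ε i| ≤ lam / 2)
    -- the explicit constants
    (C₀ ρ : ℝ) (hC₀ : C₀ = (1 + 2 * c₃) / (c * c₂))
    (hρ : ρ = C₀ ^ 2 * lam ^ 2 / τ ^ 2) (hρ1 : ρ < 1) :
    Real.sqrt (∑ i, (X.mulVec (βh - β₀) i) ^ 2) / Real.sqrt n ≤
      Real.sqrt c * C₀ * lam * Real.sqrt (l0 β₀ : ℝ) * (1 - ρ) ^ (-(1 : ℝ) / 2) := by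
  have hn' : (0 : ℝ) < n := by exact_mod_cast hn
  set δ : Fin p → ℝ := βh - β₀ with hδ
  have hXδ : ∀ i, X.mulVec δ i = X.mulVec βh i - X.mulVec β₀ i := by
    intro i
    rw [hδ, Matrix.mulVec_sub]
    rfl
  set D : ℝ := (1 / (n : ℝ)) * ∑ i, (X.mulVec δ i) ^ 2 with hD
  set L : ℝ := ∑ j, |δ j| with hL
  set S : ℝ := ∑ j, (δ j) ^ 2 with hS
  have hD0 : 0 ≤ D := by positivity
  have hL0 : 0 ≤ L := Finset.sum_nonneg fun _ _ => abs_nonneg _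
  have hS0 : 0 ≤ S := Finset.sum_nonneg fun _ _ => sq_nonneg _
  -- basic inequality
  have hT : ∑ i, c₂ / 2 * (X.mulVec δ i) ^ 2 ≤
      ∑ i, (b (X.mulVec βh i) - b (X.mulVec β₀ i) - deriv b (X.mulVec β₀ i) * X.mulVec δ i) := by
    apply Finset.sum_le_sum
    intro i _
    rw [hXδ i]
    exact aux_taylor b hb c₂ (fun θ => (hvar θ).1) _ _
  have hP : ∑ j, pen |β₀ j| - ∑ j, pen |βh j| ≤ c₃ * lam * L := by
    rw [← Finset.sum_sub_distrib, hL, Finset.mul_sum]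
    exact Finset.sum_le_sum fun j _ => aux_pen pen _ hmono hconc hpen0 hpend0 _ _
  have hEps : (1 / (n : ℝ)) * ∑ i, ε i * X.mulVec δ i ≤ lam / 2 * L := by
    have : (1 / (n : ℝ)) * ∑ i, ε i * X.mulVec δ i
        = ∑ j, ((1 / (n : ℝ)) * ∑ i, X i j * ε i) * δ j := by
      simp only [Matrix.mulVec, dotProduct, Finset.mul_sum, Finset.sum_mul]
      rw [Finset.sum_comm]
      exact Finset.sum_congr rfl fun _ _ => Finset.sum_congr rfl fun _ _ => by ring
    rw [this, hL, Finset.mul_sum]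
    apply Finset.sum_le_sum
    intro j _
    refine le_trans (le_abs_self _) ?_
    rw [abs_mul]
    exact mul_le_mul_of_nonneg_right (hE j) (abs_nonneg _)
  have hQ := hmin β₀ hβ₀
  unfold Qn at hQ
  have hYh : ∑ i, (b (X.mulVec βh i) - b (X.mulVec β₀ i) - deriv b (X.mulVec β₀ i) * X.mulVec δ i)
      = (∑ i, b (X.mulVec βh i) - ∑ i, y i * X.mulVec βh i)
        - (∑ i, b (X.mulVec β₀ i) - ∑ i, y i * X.mulVec β₀ i) + ∑ i, ε i * X.mulVec δ i := by
    simp only [← Finset.sum_sub_distrib, ← Finset.sum_add_distrib]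
    apply Finset.sum_congr rfl
    intro i _
    rw [hXδ i, hy i]
    ring
  have hbasic : c₂ / 2 * D ≤ lam / 2 * L + c₃ * lam * L := by
    rw [hYh, ← Finset.mul_sum] at hT
    have h1 := mul_le_mul_of_nonneg_left hT (by positivity : 0 ≤ 1 / (n : ℝ))
    have h2 : c₂ / 2 * D = 1 / (n : ℝ) * (c₂ / 2 * ∑ i, (X.mulVec δ i) ^ 2) := by
      rw [hD]
      ring
    rw [h2]
    refine h1.trans ?_
    linarith
  set A : ℝ := C₀ * lam with hA
  have hC0 : 0 ≤ C₀ := by rw [hC₀]; positivity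
  have hA0 : 0 ≤ A := mul_nonneg hC0 hlam
  have hDL : D ≤ c * A * L := by
    have h1 : c * A * L = (lam / 2 * L + c₃ * lam * L) / (c₂ / 2) := by
      rw [hA, hC₀]
      field_simp
    rw [h1, le_div_iff₀ (by positivity)]
    linarith
  have hκ : l0 δ < κ := by
    have h1 := aux_l0_sub βh β₀
    have h2 := hβh.1
    have h3 := hβ₀.1
    rw [← hδ] at h1
    omega
  have hSD : c * S ≤ D := hse δ hκ
  have hLS : L ^ 2 ≤ (l0 δ : ℝ) * S := aux_l1 δ
  have hcount : τ ^ 2 * (l0 δ : ℝ) ≤ τ ^ 2 * (l0 β₀ : ℝ) + S := aux_count τ hτ βh β₀ hβh.2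
  have hρA : ρ * τ ^ 2 = A ^ 2 := by
    rw [hρ, hA]
    field_simp
  set k : ℝ := (l0 δ : ℝ) with hk
  set s : ℝ := (l0 β₀ : ℝ) with hs
  have hk0 : 0 ≤ k := Nat.cast_nonneg _
  have hs0 : 0 ≤ s := Nat.cast_nonneg _
  have hDk : D ≤ c * A ^ 2 * k := by
    rcases hD0.eq_or_lt with h | h
    · rw [← h]
      positivity
    · have h1 : D ^ 2 ≤ (c * A * L) ^ 2 := by gcongr
      have h2 : (c * A * L) ^ 2 ≤ (c * A) ^ 2 * (k * S) := by
        rw [mul_pow]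
        gcongr
      have h3 : (c * A) ^ 2 * (k * S) = c * A ^ 2 * k * (c * S) := by ring
      have h4 : c * A ^ 2 * k * (c * S) ≤ c * A ^ 2 * k * D := by gcongr
      have h5 : D * D ≤ c * A ^ 2 * k * D := by nlinarith
      exact le_of_mul_le_mul_right h5 h
  have hSk : S ≤ A ^ 2 * k := by
    have : c * S ≤ c * (A ^ 2 * k) := by linarith
    exact le_of_mul_le_mul_left this hc
  have hks : (1 - ρ) * k ≤ s := by
    have h1 : τ ^ 2 * ((1 - ρ) * k) ≤ τ ^ 2 * s := by
      rw [← hρA] at hSk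
      linarith
    exact le_of_mul_le_mul_left h1 (by positivity)
  have hρ' : 0 < 1 - ρ := by linarith
  have hfin : D ≤ c * A ^ 2 * (s * (1 - ρ)⁻¹) := by
    refine hDk.trans ?_
    have : k ≤ s * (1 - ρ)⁻¹ := by
      rw [← div_eq_mul_inv, le_div_iff₀ hρ']
      linarith
    gcongr
  have hl : Real.sqrt (∑ i, (X.mulVec δ i) ^ 2) / Real.sqrt n = Real.sqrt D := by
    rw [← Real.sqrt_div' _ hn'.le, hD]
    congr 1
    ring
  have hr : (1 - ρ) ^ (-(1 : ℝ) / 2) = Real.sqrt ((1 - ρ)⁻¹) := by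
    rw [Real.sqrt_eq_rpow, ← Real.rpow_neg_one, ← Real.rpow_mul hρ'.le]
    norm_num
  rw [hl, hr]
  refine (Real.sqrt_le_sqrt hfin).trans (le_of_eq ?_)
  rw [Real.sqrt_mul (by positivity), Real.sqrt_mul hc.le, Real.sqrt_sq hA0, Real.sqrt_mul hs0]
  ring
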